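/- Let S be a finite nonempty type, p : S → PMF S a transition function, and for each state s let μ_{p,s} denote the Markov-chain trajectory measure on ℕ → S started at s. Define the support graph on S by putting an edge from s to s' whenever p s assigns positive probability to s'. Fix a start state s and a target set T ⊆ S. If for every state t reachable from s in the support graph one has μ_{p,t}(Reach(T)) > 0, then μ_{p,s}(Reach(T)) = 1. (Zero–one principle for qualitative reachability in finite Markov chains, underlying the correctness of the paper's qualitative analysis.) -/

import Mathlib

open MeasureTheory
open scoped Classical

/-- `IsMarkovTraj p s μ` says that `μ` is the trajectory measure on `ℕ → S` of the
Markov chain with one-step transition function `p` started at `s` (as obtained by the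
Ionescu–Tulcea construction from the kernel induced by `p`): it is the unique probability
measure whose cylinder probabilities are the Markov-chain ones. -/
def IsMarkovTraj {S : Type*} [MeasurableSpace S] (p : S → PMF S) (s : S)
    (μ : Measure (ℕ → S)) : Prop :=
  IsProbabilityMeasure μ ∧
    ∀ (n : ℕ) (w : Fin (n + 1) → S),
      μ {ω | ∀ i : Fin (n + 1), ω i = w i} =
        if w 0 = s then ∏ i : Fin n, p (w i.castSucc) (w i.succ) else 0

open scoped ENNReal

/-- The probability, under the transition function `p` and from a given start state, that the
first `n + 1` states all lie outside `T`. -/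
noncomputable def avoidProb {S : Type*} [Fintype S] (p : S → PMF S) (T : Set S) :
    ℕ → S → ℝ≥0∞
  | 0, t => if t ∈ T then 0 else 1
  | n + 1, t => if t ∈ T then 0 else ∑ u, p t u * avoidProb p T n u

section AvoidProb

variable {S : Type*} [Fintype S] {p : S → PMF S} {T : Set S}

theorem avoidProb_of_mem {t : S} (ht : t ∈ T) (n : ℕ) : avoidProb p T n t = 0 := by
  cases n <;> simp [avoidProb, ht]

theorem avoidProb_eq_sum_paths (n : ℕ) (t : S) :
    avoidProb p T n t = ∑ w : Fin (n + 1) → S,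
      if ∀ i, w i ∉ T then
        if w 0 = t then ∏ i : Fin n, p (w i.castSucc) (w i.succ) else 0
      else 0 := by
  induction n generalizing t with
  | zero =>
    rw [← (Equiv.funUnique (Fin 1) S).symm.sum_comp]
    by_cases ht : t ∈ T
    · simp only [avoidProb, ht, if_true]
      refine (Finset.sum_eq_zero fun x _ => ?_).symm
      by_cases hx : x = t <;> simp [hx, ht]
    · rw [Finset.sum_eq_single t] <;> simp +contextual [avoidProb, ht]
  | succ n ih =>
    rw [← (Fin.consEquiv fun _ : Fin (n + 2) => S).sum_comp, Fintype.sum_prod_type,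
      Finset.sum_eq_single t]
    · by_cases ht : t ∈ T
      · simp [avoidProb, ht, Fin.consEquiv, Fin.forall_fin_succ]
      · simp only [avoidProb, ht, if_false, ih, Finset.mul_sum]
        rw [Finset.sum_comm]
        refine Finset.sum_congr rfl fun w _ => ?_
        rw [Finset.sum_eq_single (w 0)]
        · simp [Fin.consEquiv, Fin.forall_fin_succ (n := n + 1), Fin.prod_univ_succ (n := n), ht]
        · intro u _ hu
          simp [hu.symm]
        · simp
    · intro x _ hx
      simp [Fin.consEquiv, hx]
    · simp

theorem avoidProb_add_le {R : Set S} (hR : ∀ t ∈ R, ∀ u, 0 < p t u → u ∈ R)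
    {N : ℕ} {c : ℝ≥0∞} (hc : ∀ t ∈ R, avoidProb p T N t ≤ c) (m : ℕ) {t : S} (ht : t ∈ R) :
    avoidProb p T (N + m) t ≤ c * avoidProb p T m t := by
  by_cases htT : t ∈ T
  · simp [avoidProb_of_mem htT]
  induction m generalizing t with
  | zero => simpa [avoidProb, htT] using hc t ht
  | succ m ih =>
    rw [← Nat.add_assoc]
    simp only [avoidProb, htT, if_false, Finset.mul_sum]
    refine Finset.sum_le_sum fun u _ => ?_
    rcases eq_zero_or_pos (p t u) with hu | hu
    · simp [hu]
    · rw [mul_left_comm]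
      gcongr
      by_cases huT : u ∈ T
      · simp [avoidProb_of_mem huT]
      · exact ih (hR t ht u hu) huT

theorem avoidProb_mul_le_pow {R : Set S} (hR : ∀ t ∈ R, ∀ u, 0 < p t u → u ∈ R)
    {N : ℕ} {c : ℝ≥0∞} (hc : ∀ t ∈ R, avoidProb p T N t ≤ c) (k : ℕ) {t : S} (ht : t ∈ R) :
    avoidProb p T (N * k) t ≤ c ^ k := by
  induction k with
  | zero =>
    simp only [mul_zero, avoidProb, pow_zero]
    split_ifs <;> simp
  | succ k ih =>
    rw [mul_add_one, add_comm, pow_succ']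
    exact (avoidProb_add_le hR hc _ ht).trans (by gcongr)

variable [MeasurableSpace S] [DiscreteMeasurableSpace S]

theorem IsMarkovTraj.measure_avoid {t : S} {ν : Measure (ℕ → S)} (hν : IsMarkovTraj p t ν)
    (n : ℕ) : ν {ω | ∀ i ≤ n, ω i ∉ T} = avoidProb p T n t := by
  let f : (ℕ → S) → Fin (n + 1) → S := fun ω i => ω i
  have hf : Measurable f := measurable_pi_lambda _ fun i => measurable_pi_apply _
  have hset : {ω : ℕ → S | ∀ i ≤ n, ω i ∉ T} =
      f ⁻¹' ((Finset.univ.filter fun w : Fin (n + 1) → S => ∀ i, w i ∉ T) : Finset _) := by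
    ext ω
    simp [f, Fin.forall_iff]
  rw [hset, ← sum_measure_preimage_singleton _ fun w _ => hf (measurableSet_singleton w),
    Finset.sum_filter, avoidProb_eq_sum_paths]
  refine Finset.sum_congr rfl fun w _ => ?_
  rw [← hν.2 n w]
  congr 2
  ext ω
  simp [f, funext_iff]

theorem IsMarkovTraj.avoidProb_antitone {t : S} {ν : Measure (ℕ → S)}
    (hν : IsMarkovTraj p t ν) : Antitone fun n => avoidProb p T n t := by
  intro m n hmn
  simp only [← hν.measure_avoid]
  exact measure_mono fun ω hω i hi => hω i (hi.trans hmn)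

theorem IsMarkovTraj.exists_avoidProb_lt_one {t : S} {ν : Measure (ℕ → S)}
    (hν : IsMarkovTraj p t ν) (hpos : 0 < ν {ω | ∃ n, ω n ∈ T}) :
    ∃ n, avoidProb p T n t < 1 := by
  have := hν.1
  rw [Set.ofPred_exists] at hpos
  obtain ⟨n, hn⟩ := exists_measure_pos_of_not_measure_iUnion_null hpos.ne'
  refine ⟨n, ?_⟩
  have hmeas : MeasurableSet {ω : ℕ → S | ω n ∈ T} :=
    measurable_pi_apply n (MeasurableSet.of_discrete (s := T))
  rw [← hν.measure_avoid]
  calc ν {ω | ∀ i ≤ n, ω i ∉ T} ≤ ν {ω | ω n ∈ T}ᶜ := measure_mono fun ω hω => hω n le_rfl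
    _ < 1 := by
      rw [prob_compl_eq_one_sub hmeas]
      exact ENNReal.sub_lt_self ENNReal.one_ne_top one_ne_zero hn.ne'

end AvoidProb

/-- Zero–one principle for qualitative reachability in finite Markov chains: if from every
state reachable from `s` in the support graph the target set `T` is reached with positive
probability, then from `s` it is reached almost surely. -/
theorem markov_reach_ae_of_pos_from_reachable
    {S : Type*} [Fintype S] [Nonempty S] [MeasurableSpace S] [DiscreteMeasurableSpace S]
    (p : S → PMF S)
    (μ : S → Measure (ℕ → S)) (hμ : ∀ t, IsMarkovTraj p t (μ t))
    (s : S) (T : Set S)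
    (h : ∀ t, Relation.ReflTransGen (fun a b => 0 < p a b) s t →
      0 < μ t {ω | ∃ n, ω n ∈ T}) :
    μ s {ω | ∃ n, ω n ∈ T} = 1 := by
  let R : Set S := {t | Relation.ReflTransGen (fun a b => 0 < p a b) s t}
  have hR : ∀ t ∈ R, ∀ u, 0 < p t u → u ∈ R := fun t ht u hu => Relation.ReflTransGen.tail ht hu
  have hlt : ∀ t, ∃ n, t ∈ R → avoidProb p T n t < 1 := fun t => by
    by_cases ht : t ∈ R
    · obtain ⟨n, hn⟩ := (hμ t).exists_avoidProb_lt_one (h t ht)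
      exact ⟨n, fun _ => hn⟩
    · exact ⟨0, fun h' => absurd h' ht⟩
  choose n hn using hlt
  let N := Finset.univ.sup n
  let c : ℝ≥0∞ := (Finset.univ.filter (· ∈ R)).sup (avoidProb p T N)
  have hc : ∀ t ∈ R, avoidProb p T N t ≤ c := fun t ht => Finset.le_sup (by simpa using ht)
  have hc1 : c < 1 := (Finset.sup_lt_iff (by simp)).2 fun t ht =>
    ((hμ t).avoidProb_antitone (Finset.le_sup (Finset.mem_univ t))).trans_lt
      (hn t (by simpa using ht))
  have := (hμ s).1
  have hmeas : MeasurableSet {ω : ℕ → S | ∃ n, ω n ∈ T} := by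
    rw [Set.ofPred_exists]
    exact .iUnion fun n => measurable_pi_apply n (MeasurableSet.of_discrete (s := T))
  rw [← prob_compl_eq_zero_iff hmeas, ← nonpos_iff_eq_zero]
  refine ge_of_tendsto' (ENNReal.tendsto_pow_atTop_nhds_zero_of_lt_one hc1) fun k => ?_
  refine le_trans ?_ (avoidProb_mul_le_pow hR hc k Relation.ReflTransGen.refl)
  rw [← (hμ s).measure_avoid]
  exact measure_mono fun ω hω i _ hi => hω ⟨i, hi⟩
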